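/- arXiv:1604.05439 — 4 statements merged into one kernel-verified Lean document; each statement's English description precedes it below -/
import Mathlib

section
/- Let E and F be graphs with finitely many vertices. If E ∼_CE F, then E∧ ∼_CE F∧; and if E ∼_ME F, then E∧ ∼_ME F∧. -/
attribute [local instance] Classical.propDecidable

/-- A directed graph: a set of vertices, a set of edges, and source/range maps. -/
structure DirGraph : Type 1 where
  V : Type
  E : Type
  s : E → V
  r : E → V

namespace DirGraph

variable (G : DirGraph)

/-- A vertex is regular if it emits a finite nonzero number of edges. -/
def Regular (v : G.V) : Prop :=
  {e : G.E | G.s e = v}.Finite ∧ {e : G.E | G.s e = v}.Nonempty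

/-- A vertex is a sink if it emits no edges. -/
def IsSink (v : G.V) : Prop := ∀ e : G.E, G.s e ≠ v

/-- A vertex is an infinite emitter if it emits infinitely many edges. -/
def InfiniteEmitter (v : G.V) : Prop := {e : G.E | G.s e = v}.Infinite

/-- One-step reachability: there is an edge from `u` to `v`. -/
def Step (u v : G.V) : Prop := ∃ e : G.E, G.s e = u ∧ G.r e = v

/-- `Reach u v` means there is a (possibly empty) path from `u` to `v`, i.e. `u ≥ v`. -/
def Reach : G.V → G.V → Prop := Relation.ReflTransGen G.Step

/-- A vertex supports a cycle if there is a nonempty path from it to itself. -/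
def SupportsCycle (v : G.V) : Prop := Relation.TransGen G.Step v v

/-- A transition state is a regular vertex which does not support a cycle. -/
def TransitionState (v : G.V) : Prop := G.Regular v ∧ ¬ G.SupportsCycle v

/-- A set of vertices is hereditary if it is closed under reachability. -/
def Hereditary (H : Set G.V) : Prop := ∀ u v : G.V, u ∈ H → G.Reach u v → v ∈ H

/-- A set of vertices is saturated if it contains every regular vertex all of whose
emitted edges end in the set. -/
def Saturated (S : Set G.V) : Prop :=
  ∀ v : G.V, G.Regular v → (∀ e : G.E, G.s e = v → G.r e ∈ S) → v ∈ S

/-- `H(S)`: the smallest hereditary set containing `S`. -/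
def heredClosure (S : Set G.V) : Set G.V := ⋂₀ {H : Set G.V | G.Hereditary H ∧ S ⊆ H}

/-- The saturation of `S`: the smallest saturated set containing `S`. -/
def saturate (S : Set G.V) : Set G.V := ⋂₀ {T : Set G.V | G.Saturated T ∧ S ⊆ T}

/-- A nonempty set is strongly connected if any two of its vertices are joined by
a nonempty path. -/
def StronglyConn (S : Set G.V) : Prop :=
  S.Nonempty ∧ ∀ u ∈ S, ∀ v ∈ S, Relation.TransGen G.Step u v

/-- The components of `G` (elements of `Γ_E`): maximal strongly connected subsets together
with singletons of singular vertices not supporting a cycle. -/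
def IsComponent (γ : Set G.V) : Prop :=
  (G.StronglyConn γ ∧ ∀ δ : Set G.V, G.StronglyConn δ → γ ⊆ δ → δ = γ) ∨
  (∃ v : G.V, γ = {v} ∧ ¬ G.Regular v ∧ ¬ G.SupportsCycle v)

/-- The order on components: `γ ≥ δ` iff some vertex of `γ` reaches some vertex of `δ`. -/
def CompGE (γ δ : Set G.V) : Prop := ∃ u ∈ γ, ∃ w ∈ δ, G.Reach u w

/-- `η` is a hereditary set of components. -/
def HeredComp (η : Set (Set G.V)) : Prop :=
  (∀ γ ∈ η, G.IsComponent γ) ∧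
  ∀ γ δ : Set G.V, γ ∈ η → G.IsComponent δ → G.CompGE γ δ → δ ∈ η

/-- A list of edges is a path if consecutive edges are composable. -/
def IsPathChain (p : List G.E) : Prop := List.Chain' (fun e f => G.r e = G.s f) p

/-- `p` is a return path based at `v`: a nonempty path from `v` to `v` not revisiting `v`
before the final edge. -/
def IsReturnPath (v : G.V) (p : List G.E) : Prop :=
  ∃ h : p ≠ [], G.IsPathChain p ∧ G.s (p.head h) = v ∧ G.r (p.getLast h) = v ∧
    ∀ e ∈ p.dropLast, G.r e ≠ v

/-- `v` supports (at least) two distinct return paths. -/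
def TwoReturnPaths (v : G.V) : Prop :=
  ∃ p q : List G.E, G.IsReturnPath v p ∧ G.IsReturnPath v q ∧ p ≠ q

/-- `v` supports a unique return path. -/
def UniqueReturnPath (v : G.V) : Prop := ∃! p : List G.E, G.IsReturnPath v p

/-- A component is cyclic if each of its vertices supports exactly one return path. -/
def CyclicComponent (γ : Set G.V) : Prop :=
  G.IsComponent γ ∧ ∀ v ∈ γ, G.UniqueReturnPath v

/-- Condition (K): every vertex supports either no return path or at least two. -/
def ConditionK : Prop :=
  ∀ v : G.V, (¬ ∃ p : List G.E, G.IsReturnPath v p) ∨ G.TwoReturnPaths v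

/-- The cycle (or path) `p` has an exit. -/
def HasExit (p : List G.E) : Prop := ∃ f e : G.E, e ∈ p ∧ G.s f = G.s e ∧ f ≠ e

/-- `p` is a nonempty path from `v` to `w`. -/
def IsPathFromTo (v w : G.V) (p : List G.E) : Prop :=
  ∃ h : p ≠ [], G.IsPathChain p ∧ G.s (p.head h) = v ∧ G.r (p.getLast h) = w

/-- Condition (H). -/
def ConditionH : Prop :=
  ∀ v : G.V, G.Regular v → G.UniqueReturnPath v →
    (∀ p : List G.E, G.IsReturnPath v p → ¬ G.HasExit p) ∨
    ∃ w : G.V, w ≠ v ∧ (¬ G.Regular w ∨ G.UniqueReturnPath w) ∧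
      (∃ p : List G.E, G.IsPathFromTo v w p) ∧
      ∀ p : List G.E, G.IsPathFromTo v w p → ∀ e ∈ p,
        ¬ G.TwoReturnPaths (G.s e) ∧ ¬ G.TwoReturnPaths (G.r e)

/-- The temperature `τ_E(γ) = sgn(|γ¹| − |γ|)` of a set of vertices, with the conventions
`sgn(0) = 0` and `sgn(∞) = 1`. -/
noncomputable def temp (γ : Set G.V) : ℤ :=
  if {e : G.E | G.s e ∈ γ ∧ G.r e ∈ γ}.Infinite then 1
  else Int.sign ((Nat.card {e : G.E | G.s e ∈ γ ∧ G.r e ∈ γ} : ℤ) - (Nat.card γ : ℤ))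

end DirGraph

namespace DirGraph

/-- Isomorphism of graphs. -/
def GraphIso (G H : DirGraph) : Prop :=
  ∃ (fV : G.V ≃ H.V) (fE : G.E ≃ H.E),
    (∀ e : G.E, H.s (fE e) = fV (G.s e)) ∧ ∀ e : G.E, H.r (fE e) = fV (G.r e)

/-- Data for Move (S): a regular source. -/
structure MoveSData (G : DirGraph) where
  w : G.V
  regular : G.Regular w
  source : ∀ e : G.E, G.r e ≠ w

/-- The graph obtained by removing the regular source `w`. -/
def MoveSData.graph {G : DirGraph} (d : MoveSData G) : DirGraph where
  V := {v : G.V // v ≠ d.w}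
  E := {e : G.E // G.s e ≠ d.w}
  s := fun e => ⟨G.s e.1, e.2⟩
  r := fun e => ⟨G.r e.1, d.source e.1⟩

def IsMoveS (G H : DirGraph) : Prop := ∃ d : MoveSData G, GraphIso d.graph H

/-- Data for Move (R): a regular vertex `w` with `s⁻¹(w) = {f}`, `r(f) ≠ w`, and all
edges into `w` emitted by the single vertex `x`. -/
structure MoveRData (G : DirGraph) where
  w : G.V
  f : G.E
  x : G.V
  hsf : ∀ e : G.E, G.s e = w ↔ e = f
  hrf : G.r f ≠ w
  hin : ∀ e : G.E, G.r e = w → G.s e = x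
  hne : ∃ e : G.E, G.r e = w

/-- The graph obtained by reducing at `w`: each edge `e` into `w` is replaced by an
edge from `x` to `r(f)`, and `w`, `f` are removed. -/
noncomputable def MoveRData.graph {G : DirGraph} (d : MoveRData G) : DirGraph where
  V := {v : G.V // v ≠ d.w}
  E := {e : G.E // e ≠ d.f}
  s := fun e => ⟨G.s e.1, fun hs => e.2 ((d.hsf e.1).mp hs)⟩
  r := fun e => if h : G.r e.1 = d.w then ⟨G.r d.f, d.hrf⟩ else ⟨G.r e.1, h⟩

def IsMoveR (G H : DirGraph) : Prop := ∃ d : MoveRData G, GraphIso d.graph H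

/-- Data for Move (O): a non-sink `w` and a partition of `s⁻¹(w)` into finitely many
nonempty sets, at most one of which is infinite. -/
structure MoveOData (G : DirGraph) where
  w : G.V
  notSink : ∃ e : G.E, G.s e = w
  nparts : ℕ
  P : {e : G.E // G.s e = w} → Fin nparts
  surj : Function.Surjective P
  oneInfinite : ∀ i j : Fin nparts,
    {e : {e : G.E // G.s e = w} | P e = i}.Infinite →
    {e : {e : G.E // G.s e = w} | P e = j}.Infinite → i = j

/-- The graph obtained from `G` by outsplitting at `w`. -/
noncomputable def MoveOData.graph {G : DirGraph} (d : MoveOData G) : DirGraph where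
  V := {v : G.V // v ≠ d.w} ⊕ Fin d.nparts
  E := {e : G.E // G.r e ≠ d.w} ⊕ ({e : G.E // G.r e = d.w} × Fin d.nparts)
  s := fun e =>
    match e with
    | .inl e => if h : G.s e.1 = d.w then .inr (d.P ⟨e.1, h⟩) else .inl ⟨G.s e.1, h⟩
    | .inr (e, _) => if h : G.s e.1 = d.w then .inr (d.P ⟨e.1, h⟩) else .inl ⟨G.s e.1, h⟩
  r := fun e =>
    match e with
    | .inl e => .inl ⟨G.r e.1, e.2⟩
    | .inr (_, i) => .inr i

def IsMoveO (G H : DirGraph) : Prop := ∃ d : MoveOData G, GraphIso d.graph H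

/-- Data for Move (I): a regular non-source `w` and a partition of `r⁻¹(w)` into
finitely many nonempty sets. -/
structure MoveIData (G : DirGraph) where
  w : G.V
  regular : G.Regular w
  notSource : ∃ e : G.E, G.r e = w
  nparts : ℕ
  P : {e : G.E // G.r e = w} → Fin nparts
  surj : Function.Surjective P

/-- The graph obtained from `G` by insplitting at `w`. -/
noncomputable def MoveIData.graph {G : DirGraph} (d : MoveIData G) : DirGraph where
  V := {v : G.V // v ≠ d.w} ⊕ Fin d.nparts
  E := {e : G.E // G.s e ≠ d.w} ⊕ ({e : G.E // G.s e = d.w} × Fin d.nparts)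
  s := fun e =>
    match e with
    | .inl e => .inl ⟨G.s e.1, e.2⟩
    | .inr (_, i) => .inr i
  r := fun e =>
    match e with
    | .inl e => if h : G.r e.1 = d.w then .inr (d.P ⟨e.1, h⟩) else .inl ⟨G.r e.1, h⟩
    | .inr (e, _) => if h : G.r e.1 = d.w then .inr (d.P ⟨e.1, h⟩) else .inl ⟨G.r e.1, h⟩

def IsMoveI (G H : DirGraph) : Prop := ∃ d : MoveIData G, GraphIso d.graph H

/-- Data for Move (C): a regular vertex supporting at least two distinct return paths. -/
structure MoveCData (G : DirGraph) where
  v : G.V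
  regular : G.Regular v
  twoRet : G.TwoReturnPaths v

/-- The graph obtained from `G` by Cuntz splicing at `v`: two new vertices `u₁, u₂`
and six new edges `v→u₁, u₁→v, u₁→u₁, u₁→u₂, u₂→u₁, u₂→u₂`. -/
def MoveCData.graph {G : DirGraph} (d : MoveCData G) : DirGraph where
  V := G.V ⊕ Fin 2
  E := G.E ⊕ Fin 6
  s := Sum.elim (fun e => Sum.inl (G.s e))
    (![Sum.inl d.v, Sum.inr 0, Sum.inr 0, Sum.inr 0, Sum.inr 1, Sum.inr 1])
  r := Sum.elim (fun e => Sum.inl (G.r e))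
    (![Sum.inr 0, Sum.inl d.v, Sum.inr 0, Sum.inr 1, Sum.inr 0, Sum.inr 1])

def IsMoveC (G H : DirGraph) : Prop := ∃ d : MoveCData G, GraphIso d.graph H

/-- An elementary step of move equivalence: graph isomorphism or one of the moves
(O), (I), (R), (S). -/
def ElemME (G H : DirGraph) : Prop :=
  GraphIso G H ∨ IsMoveO G H ∨ IsMoveI G H ∨ IsMoveR G H ∨ IsMoveS G H

/-- Move equivalence `∼_ME`: the equivalence relation generated by graph isomorphism
and moves (O), (I), (R), (S). -/
def MoveEquiv : DirGraph → DirGraph → Prop := Relation.EqvGen ElemME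

/-- An elementary step of Cuntz move equivalence. -/
def ElemCE (G H : DirGraph) : Prop := ElemME G H ∨ IsMoveC G H

/-- Cuntz move equivalence `∼_CE`: the equivalence relation generated by graph
isomorphism and moves (O), (I), (R), (S), (C). -/
def CuntzMoveEquiv : DirGraph → DirGraph → Prop := Relation.EqvGen ElemCE

/-- The plugged graph `E∧`: a loop is added at every sink. -/
def plug (G : DirGraph) : DirGraph where
  V := G.V
  E := G.E ⊕ {v : G.V // ∀ e : G.E, G.s e ≠ v}
  s := Sum.elim G.s Subtype.val
  r := Sum.elim G.r Subtype.val

end DirGraph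

/-!
A move is performed at a vertex that emits an edge, and every vertex it introduces emits an edge,
so the sinks of the new graph are exactly the sinks of the old one. The loops which plugging adds
therefore stay away from the vertex moved at, the same move can be performed in the plugged graph,
and it carries these loops along unchanged: each move commutes with plugging.
-/

section Equivalences

variable {α β γ : Type*}

theorem eqvGen_lift {r : α → α → Prop} {p : β → β → Prop} (f : α → β)
    (h : ∀ a b, r a b → p (f a) (f b)) {a b : α} (hab : Relation.EqvGen r a b) :
    Relation.EqvGen p (f a) (f b) := by
  induction hab with
  | rel a b hab => exact .rel _ _ (h a b hab)
  | refl a => exact .refl _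
  | symm _ _ _ ih => exact .symm _ _ ih
  | trans _ _ _ _ _ ih₁ ih₂ => exact .trans _ _ _ ih₁ ih₂

/-- A subtype of `α ⊕ β` that contains all of `β` splits off `β` as a summand. -/
def subtypeSumEquivSum {p : α ⊕ β → Prop} (h : ∀ b, p (.inr b)) :
    {x // p x} ≃ {a // p (.inl a)} ⊕ β :=
  Equiv.subtypeSum.trans (Equiv.sumCongr (Equiv.refl _) (Equiv.subtypeUnivEquiv h))

/-- A subtype of `α ⊕ β` that contains nothing of `β` is a subtype of `α`. -/
def subtypeSumEquivLeft {p : α ⊕ β → Prop} (h : ∀ b, ¬p (.inr b)) :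
    {x // p x} ≃ {a // p (.inl a)} :=
  haveI : IsEmpty {b // p (.inr b)} := ⟨fun b => h b.1 b.2⟩
  Equiv.subtypeSum.trans (Equiv.sumEmpty _ _)

/-- Sums commute on the right; this moves added loops past the new edges of a move. -/
def sumRightComm (α β γ : Type*) : (α ⊕ β) ⊕ γ ≃ (α ⊕ γ) ⊕ β :=
  calc (α ⊕ β) ⊕ γ
    _ ≃ α ⊕ (β ⊕ γ) := Equiv.sumAssoc α β γ
    _ ≃ α ⊕ (γ ⊕ β) := Equiv.sumCongr (Equiv.refl α) (Equiv.sumComm β γ)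
    _ ≃ (α ⊕ γ) ⊕ β := (Equiv.sumAssoc α γ β).symm

/-- The edges of a split graph are those avoiding the split vertex, together with one copy per
part of each edge meeting it. If no element of `β` meets the vertex, then `β` splits off. -/
def splitEdgesEquiv {p : α ⊕ β → Prop} (h : ∀ b, ¬p (.inr b)) :
    ({a // ¬p (.inl a)} ⊕ {a // p (.inl a)} × γ) ⊕ β ≃ {x // ¬p x} ⊕ {x // p x} × γ :=
  (sumRightComm _ _ _).trans <|
    Equiv.sumCongr (subtypeSumEquivSum (p := fun x => ¬p x) h).symm
      (Equiv.prodCongr (subtypeSumEquivLeft h).symm (Equiv.refl γ))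

end Equivalences

namespace DirGraph

open Function

variable {G H K : DirGraph} {ι : Type}

theorem IsSink.ne_of_emits {v w : G.V} (hv : G.IsSink v) (hw : ∃ e, G.s e = w) : v ≠ w := by
  rintro rfl
  exact hw.elim hv

section GraphIso

theorem GraphIso.symm : GraphIso G H → GraphIso H G := by
  rintro ⟨fV, fE, hs, hr⟩
  refine ⟨fV.symm, fE.symm, fun e => ?_, fun e => ?_⟩
  · rw [Equiv.eq_symm_apply, ← hs, Equiv.apply_symm_apply]
  · rw [Equiv.eq_symm_apply, ← hr, Equiv.apply_symm_apply]

theorem GraphIso.trans : GraphIso G H → GraphIso H K → GraphIso G K := by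
  rintro ⟨fV, fE, hs, hr⟩ ⟨gV, gE, ks, kr⟩
  exact ⟨fV.trans gV, fE.trans gE, fun e => (ks _).trans (congrArg gV (hs e)),
    fun e => (kr _).trans (congrArg gV (hr e))⟩

theorem GraphIso.plug : GraphIso G H → GraphIso (plug G) (plug H) := by
  rintro ⟨fV, fE, hs, hr⟩
  have isSink_iff (v : G.V) : G.IsSink v ↔ H.IsSink (fV v) :=
    fE.forall_congr fun {e} => by rw [hs, fV.injective.ne_iff]
  refine ⟨fV, Equiv.sumCongr fE (fV.subtypeEquiv isSink_iff), ?_, ?_⟩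
  · exact Sum.rec hs fun _ => rfl
  · exact Sum.rec hr fun _ => rfl

end GraphIso

section AddLoops

/-- The graph obtained from `G` by adding one loop at `ℓ i` for each index `i`. The plugged graph
is the case where `ℓ` enumerates the sinks. -/
def addLoops (G : DirGraph) (ℓ : ι → G.V) : DirGraph where
  V := G.V
  E := G.E ⊕ ι
  s := Sum.elim G.s ℓ
  r := Sum.elim G.r ℓ

theorem graphIso_addLoops_plug {ℓ : ι → G.V} (hinj : Injective ℓ)
    (hrange : ∀ v, v ∈ Set.range ℓ ↔ G.IsSink v) : GraphIso (G.addLoops ℓ) (plug G) := by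
  let loopEquiv : ι ≃ {v // G.IsSink v} :=
    (Equiv.ofInjective ℓ hinj).trans (Equiv.subtypeEquivRight hrange)
  refine ⟨Equiv.refl _, Equiv.sumCongr (Equiv.refl _) loopEquiv, ?_, ?_⟩ <;>
    rintro (e | i) <;> rfl

theorem graphIso_addLoops_plug_of_isSink_iff {p : G.V → Prop} {j : {v // p v} → K.V}
    (hj : Injective j) (hsink : ∀ v, K.IsSink v ↔ ∃ u, j u = v ∧ G.IsSink u.1)
    (hp : ∀ u : {v // G.IsSink v}, p u.1) :
    GraphIso (K.addLoops fun u => j ⟨u.1, hp u⟩) (plug K) := by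
  refine graphIso_addLoops_plug (hj.comp fun u u' h => ?_) fun v => ?_
  · exact Subtype.ext (Subtype.mk.inj h)
  · rw [hsink]
    exact ⟨fun ⟨u, hu⟩ => ⟨⟨u.1, hp u⟩, hu, u.2⟩, fun ⟨u, hu, hsu⟩ => ⟨⟨u.1, hsu⟩, hu⟩⟩

theorem Regular.addLoops {v : G.V} (hv : G.Regular v) {ℓ : ι → G.V} (hℓ : ∀ i, ℓ i ≠ v) :
    (G.addLoops ℓ).Regular v := by
  refine ⟨(hv.1.image Sum.inl).subset ?_, hv.2.imp' Sum.inl fun _ he => he⟩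
  rintro (e | i) he
  · exact ⟨e, he, rfl⟩
  · exact absurd he (hℓ i)

end AddLoops

section MoveS

/-- Move (S) at the same vertex, after adding loops away from that vertex. -/
def MoveSData.addLoops (d : MoveSData G) (ℓ : ι → G.V) (hℓ : ∀ i, ℓ i ≠ d.w) :
    MoveSData (G.addLoops ℓ) where
  w := d.w
  regular := d.regular.addLoops hℓ
  source := Sum.rec d.source hℓ

theorem MoveSData.graphIso_addLoops (d : MoveSData G) (ℓ : ι → G.V) (hℓ : ∀ i, ℓ i ≠ d.w) :
    GraphIso (d.graph.addLoops fun i => ⟨ℓ i, hℓ i⟩) (d.addLoops ℓ hℓ).graph := by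
  refine ⟨Equiv.refl _,
    (subtypeSumEquivSum (p := fun e => (G.addLoops ℓ).s e ≠ d.w) hℓ).symm, ?_, ?_⟩ <;>
    rintro (e | i) <;> rfl

theorem MoveSData.isSink_graph_iff (d : MoveSData G) (v : d.graph.V) :
    d.graph.IsSink v ↔ G.IsSink v.1 :=
  ⟨fun hv e he => hv ⟨e, he ▸ v.2⟩ (Subtype.ext he),
    fun hv e he => hv e.1 (congrArg Subtype.val he)⟩

theorem IsMoveS.plug : IsMoveS G H → IsMoveS (plug G) (plug H) := by
  rintro ⟨d, hd⟩
  have hne (u : {v // G.IsSink v}) : u.1 ≠ d.w := u.2.ne_of_emits d.regular.2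
  have hsink (v : d.graph.V) : d.graph.IsSink v ↔ ∃ u, id u = v ∧ G.IsSink u.1 := by
    simp [d.isSink_graph_iff]
  have hplug := graphIso_addLoops_plug_of_isSink_iff injective_id hsink hne
  exact ⟨d.addLoops Subtype.val hne,
    (d.graphIso_addLoops _ hne).symm.trans (hplug.trans hd.plug)⟩

end MoveS

section MoveR

/-- Move (R) at the same vertex, after adding loops away from that vertex. -/
def MoveRData.addLoops (d : MoveRData G) (ℓ : ι → G.V) (hℓ : ∀ i, ℓ i ≠ d.w) :
    MoveRData (G.addLoops ℓ) where
  w := d.w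
  f := .inl d.f
  x := d.x
  hsf := Sum.rec (fun e => (d.hsf e).trans Sum.inl_injective.eq_iff.symm)
    fun i => iff_of_false (hℓ i) Sum.inr_ne_inl
  hrf := d.hrf
  hin := Sum.rec d.hin fun i hi => absurd hi (hℓ i)
  hne := d.hne.imp' Sum.inl fun _ he => he

theorem MoveRData.graphIso_addLoops (d : MoveRData G) (ℓ : ι → G.V) (hℓ : ∀ i, ℓ i ≠ d.w) :
    GraphIso (d.graph.addLoops fun i => ⟨ℓ i, hℓ i⟩) (d.addLoops ℓ hℓ).graph := by
  let edgeEquiv : {e : G.E // e ≠ d.f} ⊕ ι ≃ {e : G.E ⊕ ι // e ≠ .inl d.f} :=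
    (Equiv.sumCongr (Equiv.subtypeEquivRight fun _ => Sum.inl_injective.ne_iff.symm)
      (Equiv.refl ι)).trans
        (subtypeSumEquivSum (p := fun e => e ≠ .inl d.f) fun _ => Sum.inr_ne_inl).symm
  refine ⟨Equiv.refl _, edgeEquiv, ?_, ?_⟩
  · rintro (e | i) <;> rfl
  · rintro (e | i)
    · rfl
    · exact dif_neg (hℓ i)

theorem MoveRData.isSink_graph_iff (d : MoveRData G) (v : d.graph.V) :
    d.graph.IsSink v ↔ G.IsSink v.1 := by
  refine ⟨fun hv e he => ?_, fun hv e he => hv e.1 (congrArg Subtype.val he)⟩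
  have hef : e ≠ d.f := fun hef => v.2 (he.symm.trans ((d.hsf e).2 hef))
  exact hv ⟨e, hef⟩ (Subtype.ext he)

theorem IsMoveR.plug : IsMoveR G H → IsMoveR (plug G) (plug H) := by
  rintro ⟨d, hd⟩
  have hne (u : {v // G.IsSink v}) : u.1 ≠ d.w := u.2.ne_of_emits ⟨d.f, (d.hsf d.f).2 rfl⟩
  have hsink (v : d.graph.V) : d.graph.IsSink v ↔ ∃ u, id u = v ∧ G.IsSink u.1 := by
    simp [d.isSink_graph_iff]
  have hplug := graphIso_addLoops_plug_of_isSink_iff injective_id hsink hne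
  exact ⟨d.addLoops Subtype.val hne,
    (d.graphIso_addLoops _ hne).symm.trans (hplug.trans hd.plug)⟩

end MoveR

section MoveO

/-- Move (O) at the same vertex and with the same partition, after adding loops away from that
vertex. -/
def MoveOData.addLoops (d : MoveOData G) (ℓ : ι → G.V) (hℓ : ∀ i, ℓ i ≠ d.w) :
    MoveOData (G.addLoops ℓ) :=
  let emitted : {e // (G.addLoops ℓ).s e = d.w} ≃ {e // G.s e = d.w} := subtypeSumEquivLeft hℓ
  have infinite_part (i : Fin d.nparts) (hi : {e | d.P (emitted e) = i}.Infinite) :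
      {e | d.P e = i}.Infinite :=
    Set.infinite_of_injOn_mapsTo emitted.injective.injOn (fun _ he => he) hi
  { w := d.w
    notSink := d.notSink.imp' Sum.inl fun _ he => he
    nparts := d.nparts
    P := d.P ∘ emitted
    surj := d.surj.comp emitted.surjective
    oneInfinite := fun i j hi hj => d.oneInfinite i j (infinite_part i hi) (infinite_part j hj) }

theorem MoveOData.graphIso_addLoops (d : MoveOData G) (ℓ : ι → G.V) (hℓ : ∀ i, ℓ i ≠ d.w) :
    GraphIso (d.graph.addLoops fun i => .inl ⟨ℓ i, hℓ i⟩) (d.addLoops ℓ hℓ).graph := by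
  refine ⟨Equiv.refl _, splitEdgesEquiv (p := fun e => (G.addLoops ℓ).r e = d.w) hℓ, ?_, ?_⟩
  · rintro ((e | e) | i)
    · rfl
    · rfl
    · exact dif_neg (hℓ i)
  · rintro ((e | e) | i) <;> rfl

theorem MoveOData.exists_source_eq (d : MoveOData G) (e : G.E) :
    ∃ e', d.graph.s e' =
      if h : G.s e = d.w then .inr (d.P ⟨e, h⟩) else .inl ⟨G.s e, h⟩ := by
  obtain ⟨e₀, he₀⟩ := d.notSink
  by_cases h : G.r e = d.w
  · exact ⟨.inr (⟨e, h⟩, d.P ⟨e₀, he₀⟩), rfl⟩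
  · exact ⟨.inl ⟨e, h⟩, rfl⟩

theorem MoveOData.isSink_graph_inl_iff (d : MoveOData G) (u : {v // v ≠ d.w}) :
    d.graph.IsSink (.inl u) ↔ G.IsSink u.1 := by
  refine ⟨fun hu e he => ?_, fun hu => ?_⟩
  · obtain ⟨e', he'⟩ := d.exists_source_eq e
    exact hu e' (he'.trans ((dif_neg (he ▸ u.2)).trans (congrArg Sum.inl (Subtype.ext he))))
  · have source_ne (e : G.E) : (if h : G.s e = d.w then .inr (d.P ⟨e, h⟩)
        else .inl ⟨G.s e, h⟩ : {v // v ≠ d.w} ⊕ Fin d.nparts) ≠ .inl u := by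
      split
      · exact Sum.inr_ne_inl
      · exact fun h => hu e (congrArg Subtype.val (Sum.inl_injective h))
    exact Sum.rec (fun e => source_ne e.1) fun e => source_ne e.1.1

theorem MoveOData.not_isSink_graph_inr (d : MoveOData G) (i : Fin d.nparts) :
    ¬d.graph.IsSink (.inr i) := by
  obtain ⟨⟨e, h⟩, rfl⟩ := d.surj i
  obtain ⟨e', he'⟩ := d.exists_source_eq e
  exact fun hi => hi e' (he'.trans (dif_pos h))

theorem IsMoveO.plug : IsMoveO G H → IsMoveO (plug G) (plug H) := by
  rintro ⟨d, hd⟩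
  have hne (u : {v // G.IsSink v}) : u.1 ≠ d.w := u.2.ne_of_emits d.notSink
  have hsink (v : d.graph.V) : d.graph.IsSink v ↔ ∃ u, Sum.inl u = v ∧ G.IsSink u.1 := by
    rcases v with u | i
    · simp [d.isSink_graph_inl_iff]
    · simp [d.not_isSink_graph_inr]
  have hplug := graphIso_addLoops_plug_of_isSink_iff Sum.inl_injective hsink hne
  exact ⟨d.addLoops Subtype.val hne,
    (d.graphIso_addLoops _ hne).symm.trans (hplug.trans hd.plug)⟩

end MoveO

section MoveI

/-- Move (I) at the same vertex and with the same partition, after adding loops away from that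
vertex. -/
def MoveIData.addLoops (d : MoveIData G) (ℓ : ι → G.V) (hℓ : ∀ i, ℓ i ≠ d.w) :
    MoveIData (G.addLoops ℓ) :=
  let received : {e // (G.addLoops ℓ).r e = d.w} ≃ {e // G.r e = d.w} := subtypeSumEquivLeft hℓ
  { w := d.w
    regular := d.regular.addLoops hℓ
    notSource := d.notSource.imp' Sum.inl fun _ he => he
    nparts := d.nparts
    P := d.P ∘ received
    surj := d.surj.comp received.surjective }

theorem MoveIData.graphIso_addLoops (d : MoveIData G) (ℓ : ι → G.V) (hℓ : ∀ i, ℓ i ≠ d.w) :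
    GraphIso (d.graph.addLoops fun i => .inl ⟨ℓ i, hℓ i⟩) (d.addLoops ℓ hℓ).graph := by
  refine ⟨Equiv.refl _, splitEdgesEquiv (p := fun e => (G.addLoops ℓ).s e = d.w) hℓ, ?_, ?_⟩
  · rintro ((e | e) | i) <;> rfl
  · rintro ((e | e) | i)
    · rfl
    · rfl
    · exact dif_neg (hℓ i)

theorem MoveIData.isSink_graph_inl_iff (d : MoveIData G) (u : {v // v ≠ d.w}) :
    d.graph.IsSink (.inl u) ↔ G.IsSink u.1 := by
  refine ⟨fun hu e he => hu (.inl ⟨e, he ▸ u.2⟩) (congrArg Sum.inl (Subtype.ext he)), fun hu => ?_⟩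
  rintro (e | e)
  · exact fun he => hu e.1 (congrArg Subtype.val (Sum.inl_injective he))
  · exact Sum.inr_ne_inl

theorem MoveIData.not_isSink_graph_inr (d : MoveIData G) (i : Fin d.nparts) :
    ¬d.graph.IsSink (.inr i) := by
  obtain ⟨e, he⟩ := d.regular.2
  exact fun hi => hi (.inr (⟨e, he⟩, i)) rfl

theorem IsMoveI.plug : IsMoveI G H → IsMoveI (plug G) (plug H) := by
  rintro ⟨d, hd⟩
  have hne (u : {v // G.IsSink v}) : u.1 ≠ d.w := u.2.ne_of_emits d.regular.2
  have hsink (v : d.graph.V) : d.graph.IsSink v ↔ ∃ u, Sum.inl u = v ∧ G.IsSink u.1 := by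
    rcases v with u | i
    · simp [d.isSink_graph_inl_iff]
    · simp [d.not_isSink_graph_inr]
  have hplug := graphIso_addLoops_plug_of_isSink_iff Sum.inl_injective hsink hne
  exact ⟨d.addLoops Subtype.val hne,
    (d.graphIso_addLoops _ hne).symm.trans (hplug.trans hd.plug)⟩

end MoveI

section MoveC

theorem IsReturnPath.map {fV : G.V → H.V} {fE : G.E → H.E} (hV : Injective fV)
    (hs : ∀ e, H.s (fE e) = fV (G.s e)) (hr : ∀ e, H.r (fE e) = fV (G.r e)) {v : G.V}
    {p : List G.E} (hp : G.IsReturnPath v p) : H.IsReturnPath (fV v) (p.map fE) := by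
  obtain ⟨hne, hchain, hstart, hend, hreturn⟩ := hp
  refine ⟨mt List.map_eq_nil_iff.1 hne, ?_, ?_, ?_, ?_⟩
  · refine (List.isChain_map fE).2 (hchain.imp fun e f hef => ?_)
    rw [hs, hr, hef]
  · rw [List.head_map, hs, hstart]
  · rw [List.getLast_map, hr, hend]
  · rw [← List.map_dropLast, List.forall_mem_map]
    intro e he
    rw [hr]
    exact hV.ne (hreturn e he)

theorem TwoReturnPaths.map {fV : G.V → H.V} {fE : G.E → H.E} (hV : Injective fV)
    (hE : Injective fE) (hs : ∀ e, H.s (fE e) = fV (G.s e)) (hr : ∀ e, H.r (fE e) = fV (G.r e))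
    {v : G.V} : G.TwoReturnPaths v → H.TwoReturnPaths (fV v) := by
  rintro ⟨p, q, hp, hq, hpq⟩
  exact ⟨p.map fE, q.map fE, hp.map hV hs hr, hq.map hV hs hr, hE.list_map.ne hpq⟩

theorem TwoReturnPaths.addLoops {v : G.V} (hv : G.TwoReturnPaths v) (ℓ : ι → G.V) :
    (G.addLoops ℓ).TwoReturnPaths v :=
  TwoReturnPaths.map (G := G) (H := G.addLoops ℓ) (fV := id) (fE := Sum.inl) injective_id
    Sum.inl_injective (fun _ => rfl) (fun _ => rfl) hv

/-- Move (C) at the same vertex, after adding loops away from that vertex. -/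
def MoveCData.addLoops (d : MoveCData G) (ℓ : ι → G.V) (hℓ : ∀ i, ℓ i ≠ d.v) :
    MoveCData (G.addLoops ℓ) where
  v := d.v
  regular := d.regular.addLoops hℓ
  twoRet := d.twoRet.addLoops ℓ

theorem MoveCData.graphIso_addLoops (d : MoveCData G) (ℓ : ι → G.V) (hℓ : ∀ i, ℓ i ≠ d.v) :
    GraphIso (d.graph.addLoops fun i => .inl (ℓ i)) (d.addLoops ℓ hℓ).graph := by
  refine ⟨Equiv.refl _, sumRightComm G.E (Fin 6) ι, ?_, ?_⟩ <;> rintro ((e | j) | i) <;> rfl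

theorem MoveCData.isSink_graph_inl_iff (d : MoveCData G) (u : G.V) :
    d.graph.IsSink (.inl u) ↔ G.IsSink u := by
  refine ⟨fun hu e he => hu (.inl e) (congrArg Sum.inl he), fun hu => ?_⟩
  rintro (e | i)
  · exact fun he => hu e (Sum.inl_injective he)
  · have hvu : d.v ≠ u := (hu.ne_of_emits d.regular.2).symm
    fin_cases i
    · exact Sum.inl_injective.ne hvu
    all_goals exact Sum.inr_ne_inl

theorem MoveCData.not_isSink_graph_inr (d : MoveCData G) (i : Fin 2) :
    ¬d.graph.IsSink (.inr i) := by
  fin_cases i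
  · exact fun h => h (.inr 2) rfl
  · exact fun h => h (.inr 5) rfl

theorem IsMoveC.plug : IsMoveC G H → IsMoveC (plug G) (plug H) := by
  rintro ⟨d, hd⟩
  have hne (u : {v // G.IsSink v}) : u.1 ≠ d.v := u.2.ne_of_emits d.regular.2
  refine ⟨d.addLoops Subtype.val hne, (d.graphIso_addLoops _ hne).symm.trans <|
    (graphIso_addLoops_plug ?_ ?_).trans hd.plug⟩
  · exact Sum.inl_injective.comp Subtype.val_injective
  · rintro (v | i)
    · rw [d.isSink_graph_inl_iff]
      exact ⟨fun ⟨u, hu⟩ => Sum.inl_injective hu ▸ u.2, fun hv => ⟨⟨v, hv⟩, rfl⟩⟩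
    · exact iff_of_false (fun ⟨_, hu⟩ => Sum.inl_ne_inr hu) (d.not_isSink_graph_inr i)

end MoveC

section MoveEquivalence

theorem ElemME.plug : ElemME G H → ElemME (plug G) (plug H) :=
  Or.imp GraphIso.plug <| Or.imp IsMoveO.plug <| Or.imp IsMoveI.plug <|
    Or.imp IsMoveR.plug IsMoveS.plug

theorem ElemCE.plug : ElemCE G H → ElemCE (plug G) (plug H) :=
  Or.imp ElemME.plug IsMoveC.plug

theorem MoveEquiv.plug : MoveEquiv G H → MoveEquiv (plug G) (plug H) :=
  eqvGen_lift DirGraph.plug fun _ _ => ElemME.plug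

theorem CuntzMoveEquiv.plug : CuntzMoveEquiv G H → CuntzMoveEquiv (plug G) (plug H) :=
  eqvGen_lift DirGraph.plug fun _ _ => ElemCE.plug

end MoveEquivalence

end DirGraph

open DirGraph in
theorem stmt11_general (E F : DirGraph) :
    (CuntzMoveEquiv E F → CuntzMoveEquiv (plug E) (plug F)) ∧
    (MoveEquiv E F → MoveEquiv (plug E) (plug F)) :=
  ⟨CuntzMoveEquiv.plug, MoveEquiv.plug⟩

open DirGraph in
/-- Lemma `CEpassestoplugged`: for graphs with finitely many vertices,
`E ∼_CE F` implies `E∧ ∼_CE F∧`, and `E ∼_ME F` implies `E∧ ∼_ME F∧`. -/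
theorem stmt11 (E F : DirGraph) (hcE : Countable E.E) (hcF : Countable F.E)
    (hE : Finite E.V) (hF : Finite F.V) :
    (CuntzMoveEquiv E F → CuntzMoveEquiv (plug E) (plug F)) ∧
    (MoveEquiv E F → MoveEquiv (plug E) (plug F)) := by
  exact stmt11_general E F
end

section
/- There do not exist integers x, x', y, y', z, z' and s, s' ∈ {1, −1} such that the matrix product [[1, x, y], [0, s, z], [0, 0, 1]] · [[0, 1, 2], [0, 1, 1], [0, 0, 0]] · [[1, x', y'], [0, s', z'], [0, 0, 1]] equals [[0, 1, 0], [0, 1, 1], [0, 0, 0]]. -/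
/-! Only the top-right `2 × 2` block `M` of the middle matrix is nonzero, so the corresponding block
of the product is `P * M * Q` with `P = !![1, x; 0, s]` and `Q = !![s', z'; 0, 1]`. Passing from `M`
to `P * M * Q` multiplies both the determinant and the lower-left entry by `s * s'`. For
`!![1, 2; 1, 1]` these are `-1` and `1`, for `!![1, 0; 1, 1]` they are `1` and `1`; hence `1 = -1`.
-/

open Matrix

theorem isUpperTriangular_fin_two {R : Type*} [Zero R] (a b d : R) :
    !![a, b; 0, d].IsUpperTriangular := by
  intro i j hij
  fin_cases i <;> fin_cases j <;> simp_all

section NonUnitalNonAssocSemiring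

variable {R : Type*} [NonUnitalNonAssocSemiring R] {m n : ℕ}

theorem submatrix_mul_mul_of_row_last_eq_zero_of_col_zero_eq_zero {ι κ l o : Type*}
    (U : Matrix l (Fin (m + 1)) R) {A : Matrix (Fin (m + 1)) (Fin (n + 1)) R}
    (V : Matrix (Fin (n + 1)) o R) (hrow : ∀ j, A (Fin.last m) j = 0) (hcol : ∀ i, A i 0 = 0)
    (r : ι → l) (c : κ → o) :
    (U * A * V).submatrix r c =
      U.submatrix r Fin.castSucc * A.submatrix Fin.castSucc Fin.succ * V.submatrix Fin.succ c := by
  ext i j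
  simp [mul_apply, Fin.sum_univ_castSucc (n := m), Fin.sum_univ_succ (n := n), hrow, hcol]

theorem mul_last_apply_of_isUpperTriangular {P : Matrix (Fin (m + 1)) (Fin (m + 1)) R}
    (hP : P.IsUpperTriangular) {ι : Type*} (M : Matrix (Fin (m + 1)) ι R) (j : ι) :
    (P * M) (Fin.last m) j = P (Fin.last m) (Fin.last m) * M (Fin.last m) j := by
  have hrow (k : Fin m) : P (Fin.last m) k.castSucc = 0 := hP k.castSucc_lt_last
  simp [mul_apply, Fin.sum_univ_castSucc, hrow]

theorem mul_apply_zero_of_isUpperTriangular {Q : Matrix (Fin (n + 1)) (Fin (n + 1)) R}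
    (hQ : Q.IsUpperTriangular) {ι : Type*} (M : Matrix ι (Fin (n + 1)) R) (i : ι) :
    (M * Q) i 0 = M i 0 * Q 0 0 := by
  have hcol (k : Fin n) : Q k.succ 0 = 0 := hQ k.succ_pos
  simp [mul_apply, Fin.sum_univ_succ, hcol]

end NonUnitalNonAssocSemiring

section CommRing

variable {R : Type*} [CommRing R]

theorem det_mul_mul_mul_apply_last_zero {n : ℕ} {P Q : Matrix (Fin (n + 1)) (Fin (n + 1)) R}
    (hP : P.IsUpperTriangular) (hQ : Q.IsUpperTriangular)
    (M : Matrix (Fin (n + 1)) (Fin (n + 1)) R) :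
    (P * M * Q).det * M (Fin.last n) 0 =
      (∏ i : Fin n, P i.castSucc i.castSucc) * (∏ i : Fin n, Q i.succ i.succ) *
        (M.det * (P * M * Q) (Fin.last n) 0) := by
  rw [det_mul, det_mul, det_of_isUpperTriangular hP, det_of_isUpperTriangular hQ,
    Fin.prod_univ_castSucc, Fin.prod_univ_succ (fun i ↦ Q i i),
    mul_apply_zero_of_isUpperTriangular hQ, mul_last_apply_of_isUpperTriangular hP]
  ring

theorem stmt16_general (h2 : (2 : R) ≠ 0) :
    ¬ ∃ (x x' y y' z z' s s' : R),
      !![(1 : R), x, y; 0, s, z; 0, 0, 1] * !![(0 : R), 1, 2; 0, 1, 1; 0, 0, 0] *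
        !![(1 : R), x', y'; 0, s', z'; 0, 0, 1] =
      !![(0 : R), 1, 0; 0, 1, 1; 0, 0, 0] := by
  rintro ⟨x, x', y, y', z, z', s, s', h⟩
  have hblock : !![1, x; 0, s] * !![(1 : R), 2; 1, 1] * !![s', z'; 0, 1] = !![1, 0; 1, 1] := by
    have hsub := congrArg (·.submatrix (Fin.castSucc (n := 2)) (Fin.succ (n := 2))) h
    rw [submatrix_mul_mul_of_row_last_eq_zero_of_col_zero_eq_zero _ _
      (by simp [Fin.forall_fin_succ]) (by simp [Fin.forall_fin_succ])] at hsub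
    convert hsub using 3 <;> symm <;> exact eta_fin_two _
  have hinv := det_mul_mul_mul_apply_last_zero (isUpperTriangular_fin_two 1 x s)
    (isUpperTriangular_fin_two s' z' 1) !![(1 : R), 2; 1, 1]
  rw [hblock] at hinv
  have hone : (1 : R) = 1 - 2 := by simpa [det_fin_two] using hinv
  exact h2 (by linear_combination hone)

end CommRing

/-- Example `notalwayssamepre`: there is no solution to the matrix
equation
`[[1,x,y],[0,s,z],[0,0,1]] ⬝ [[0,1,2],[0,1,1],[0,0,0]] ⬝ [[1,x',y'],[0,s',z'],[0,0,1]]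
  = [[0,1,0],[0,1,1],[0,0,0]]`
with `s, s' ∈ {1, −1}` and integer entries. -/
theorem stmt16 :
    ¬ ∃ (x x' y y' z z' s s' : ℤ), (s = 1 ∨ s = -1) ∧ (s' = 1 ∨ s' = -1) ∧
      !![(1 : ℤ), x, y; 0, s, z; 0, 0, 1] * !![(0 : ℤ), 1, 2; 0, 1, 1; 0, 0, 0] *
        !![(1 : ℤ), x', y'; 0, s', z'; 0, 0, 1] =
      !![(0 : ℤ), 1, 0; 0, 1, 1; 0, 0, 0] := by
  rintro ⟨x, x', y, y', z, z', s, s', -, -, h⟩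
  exact stmt16_general two_ne_zero ⟨x, x', y, y', z, z', s, s', h⟩
end

section
/- Let n ≥ 1 and r ≥ 1 be integers and let B be an n×n integer matrix such that B(i, j) = 0 whenever j ≤ i, and B(i, i+1) = r for all 1 ≤ i ≤ n−1 (the entries B(i, j) for j > i+1 are arbitrary). Then the cokernel ℤⁿ / Bᵀ(ℤⁿ) of the transpose of B is isomorphic to ℤ ⊕ G for a finite abelian group G of order r^{n−1}. -/
/-!
Deleting a zero column of a matrix does not change its range, and deleting a zero row splits off
a free summand of rank one from its cokernel. The first row and the last column of `Bᵀ` vanish,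
and the square matrix left after deleting them is triangular with the superdiagonal entries of
`B` on its diagonal. Its cokernel is therefore finite, and its order is the absolute value of
the product of these entries.
-/

theorem range_mulVecLin_submatrix_id_of_col_eq_zero {R m n n' : Type*} [CommSemiring R]
    [Fintype n] [Fintype n'] (A : Matrix m n R) (f : n' → n)
    (hcol : ∀ j ∉ Set.range f, A.col j = 0) :
    LinearMap.range (A.submatrix id f).mulVecLin = LinearMap.range A.mulVecLin := by
  rw [Matrix.range_mulVecLin, Matrix.range_mulVecLin]
  apply Submodule.span_eq_span
  · rintro _ ⟨k, rfl⟩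
    exact Submodule.subset_span ⟨f k, rfl⟩
  · rintro _ ⟨j, rfl⟩
    by_cases hj : j ∈ Set.range f
    · obtain ⟨k, rfl⟩ := hj
      exact Submodule.subset_span ⟨k, rfl⟩
    · rw [hcol j hj]
      exact Submodule.zero_mem _

theorem mulVec_eq_insertNth_of_row_eq_zero {R : Type*} [NonUnitalNonAssocSemiring R] {m : ℕ}
    {n : Type*} [Fintype n] (A : Matrix (Fin (m + 1)) n R) (p : Fin (m + 1))
    (hrow : A.row p = 0) (x : n → R) :
    A.mulVec x = p.insertNth 0 ((A.submatrix p.succAbove id).mulVec x) := by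
  refine Fin.eq_insertNth_iff.mpr ⟨?_, rfl⟩
  change A.row p ⬝ᵥ x = 0
  rw [hrow, zero_dotProduct]

theorem mem_range_mulVecLin_iff_of_row_eq_zero {R : Type*} [CommSemiring R] {m : ℕ}
    {n : Type*} [Fintype n] (A : Matrix (Fin (m + 1)) n R) (p : Fin (m + 1))
    (hrow : A.row p = 0) (y : Fin (m + 1) → R) :
    y ∈ LinearMap.range A.mulVecLin ↔
      y p = 0 ∧ p.removeNth y ∈ LinearMap.range (A.submatrix p.succAbove id).mulVecLin := by
  simp only [LinearMap.mem_range, Matrix.mulVecLin_apply,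
    mulVec_eq_insertNth_of_row_eq_zero A p hrow, Fin.insertNth_eq_iff, eq_comm (a := (0 : R)),
    exists_and_left]

theorem det_submatrix_castSucc_succ_of_strictUpperTriangular {R : Type*} [CommRing R] {n : ℕ}
    (B : Matrix (Fin (n + 1)) (Fin (n + 1)) R) (hlow : ∀ i j, j ≤ i → B i j = 0) :
    (B.submatrix Fin.castSucc Fin.succ).det = ∏ i : Fin n, B i.castSucc i.succ :=
  Matrix.det_of_isUpperTriangular fun _ _ hji => hlow _ _ (Fin.succ_le_castSucc_iff.mpr hji)

/-- The cokernel `Rᵐ / A(Rⁿ)` of an `m × n` matrix over a commutative ring, the matrix acting on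
column vectors from the left. -/
abbrev MatrixCokernel {R m n : Type*} [CommRing R] [Fintype n] (A : Matrix m n R) : Type _ :=
  (m → R) ⧸ LinearMap.range A.mulVecLin

namespace MatrixCokernel

section CommRing

variable {R : Type*} [CommRing R]

/-- The free rank-one summand which a zero row contributes to the cokernel. -/
noncomputable def equivProdOfRowEqZero {m : ℕ} {n : Type*} [Fintype n]
    (A : Matrix (Fin (m + 1)) n R) (p : Fin (m + 1)) (hrow : A.row p = 0) :
    MatrixCokernel A ≃ₗ[R] R × MatrixCokernel (A.submatrix p.succAbove id) :=
  let π : (Fin (m + 1) → R) →ₗ[R] R × MatrixCokernel (A.submatrix p.succAbove id) :=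
    (LinearMap.proj p).prod (Submodule.mkQ _ ∘ₗ LinearMap.funLeft R R p.succAbove)
  have hker : LinearMap.range A.mulVecLin = LinearMap.ker π := by
    ext y
    rw [mem_range_mulVecLin_iff_of_row_eq_zero A p hrow, LinearMap.ker_prod,
      LinearMap.ker_comp, Submodule.ker_mkQ]
    rfl
  have hsurj : Function.Surjective π := by
    rintro ⟨a, z⟩
    obtain ⟨y, rfl⟩ := Submodule.mkQ_surjective _ z
    exact ⟨p.insertNth a y, by simp [π, LinearMap.funLeft, Function.comp_def]⟩
  (Submodule.quotEquivOfEq _ _ hker).trans (π.quotKerEquivOfSurjective hsurj)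

/-- Deletion of a zero row and a zero column: the former contributes a free rank-one summand to
the cokernel, the latter nothing. -/
noncomputable def equivProdOfRowEqZeroOfColEqZero {m n : ℕ}
    (A : Matrix (Fin (m + 1)) (Fin (n + 1)) R) (p : Fin (m + 1)) (q : Fin (n + 1))
    (hrow : A.row p = 0) (hcol : A.col q = 0) :
    MatrixCokernel A ≃ₗ[R] R × MatrixCokernel (A.submatrix p.succAbove q.succAbove) :=
  have hrange : LinearMap.range (A.submatrix p.succAbove id).mulVecLin =
      LinearMap.range (A.submatrix p.succAbove q.succAbove).mulVecLin := by
    refine (range_mulVecLin_submatrix_id_of_col_eq_zero _ q.succAbove fun j hj => ?_).symm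
    obtain rfl : j = q := by simpa using hj
    exact funext fun i => congrFun hcol (p.succAbove i)
  (equivProdOfRowEqZero A p hrow).trans
    ((LinearEquiv.refl R R).prodCongr (Submodule.quotEquivOfEq _ _ hrange))

end CommRing

theorem natCard_eq_natAbs_det {ι : Type*} [Fintype ι] [DecidableEq ι] (A : Matrix ι ι ℤ)
    (hA : A.det ≠ 0) : Nat.card (MatrixCokernel A) = A.det.natAbs := by
  have hinj : Function.Injective A.mulVecLin := Matrix.mulVec_injective_of_det_ne_zero hA
  rw [← Submodule.natAbs_det_equiv _ (LinearEquiv.ofInjective A.mulVecLin hinj),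
    ← LinearMap.det_toLin' A]
  rfl

theorem finite_of_det_ne_zero {ι : Type*} [Fintype ι] [DecidableEq ι] (A : Matrix ι ι ℤ)
    (hA : A.det ≠ 0) : Finite (MatrixCokernel A) :=
  Nat.finite_of_card_ne_zero <| by rwa [natCard_eq_natAbs_det A hA, Int.natAbs_ne_zero]

end MatrixCokernel

theorem stmt17_general {n : ℕ} (B : Matrix (Fin (n + 1)) (Fin (n + 1)) ℤ)
    (hlow : ∀ i j, j ≤ i → B i j = 0) (hdiag : ∀ i : Fin n, B i.castSucc i.succ ≠ 0) :
    ∃ (G : Type) (_ : AddCommGroup G) (_ : Finite G),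
      Nonempty (MatrixCokernel B.transpose ≃+ ℤ × G) ∧
      Nat.card G = ∏ i : Fin n, (B i.castSucc i.succ).natAbs := by
  let C := B.transpose.submatrix (Fin.succAbove 0) (Fin.last n).succAbove
  have hdet : C.det = ∏ i : Fin n, B i.castSucc i.succ := by
    rw [← det_submatrix_castSucc_succ_of_strictUpperTriangular B hlow, ← Matrix.det_transpose,
      Matrix.transpose_submatrix, Matrix.transpose_transpose, ← Fin.succAbove_zero,
      ← Fin.succAbove_last]
  have hdet_ne : C.det ≠ 0 := hdet ▸ Finset.prod_ne_zero_iff.mpr fun i _ => hdiag i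
  have hrow : B.transpose.row 0 = 0 := funext fun j => hlow j 0 (Fin.zero_le j)
  have hcol : B.transpose.col (Fin.last n) = 0 := funext fun i => hlow _ i (Fin.le_last i)
  refine ⟨MatrixCokernel C, inferInstance, MatrixCokernel.finite_of_det_ne_zero C hdet_ne,
    ⟨(MatrixCokernel.equivProdOfRowEqZeroOfColEqZero _ _ _ hrow hcol).toAddEquiv⟩, ?_⟩
  rw [MatrixCokernel.natCard_eq_natAbs_det C hdet_ne, hdet]
  exact map_prod Int.natAbsHom _ _

/-- Corollary `Kthy`: if `B` is an `n×n` integer matrix which vanishes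
on and below the diagonal and has all entries `r` on the first superdiagonal, then the
cokernel `ℤⁿ / Bᵀ(ℤⁿ)` is isomorphic to `ℤ ⊕ G` for a finite abelian group `G` of
order `r^(n−1)`. -/
theorem stmt17 (n r : ℕ) (hn : 1 ≤ n) (hr : 1 ≤ r)
    (B : Matrix (Fin n) (Fin n) ℤ)
    (hlow : ∀ i j : Fin n, (j : ℕ) ≤ (i : ℕ) → B i j = 0)
    (hdiag : ∀ i j : Fin n, (j : ℕ) = (i : ℕ) + 1 → B i j = (r : ℤ)) :
    ∃ (G : Type) (_ : AddCommGroup G) (_ : Finite G),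
      Nonempty (((Fin n → ℤ) ⧸ LinearMap.range (Matrix.mulVecLin B.transpose)) ≃+ ℤ × G) ∧
      Nat.card G = r ^ (n - 1) := by
  obtain ⟨m, rfl⟩ := Nat.exists_eq_add_of_le' hn
  have hsup (i : Fin m) : B i.castSucc i.succ = r := hdiag _ _ rfl
  simpa [hsup] using stmt17_general B hlow fun i => by rw [hsup]; positivity
end

section
/- Let r ∈ ℕ with r ≥ 2, n ∈ ℕ, and m = (m₁, …, m_n) ∈ ℕⁿ with gcd(m_i, r) = 1 for all i. In the graph L_{2n−1} ×_m ℤ_r: (i) for each i, j with i + 1 ≤ j ≤ n, the number of 1-step 0-simple paths from (v_i, 0) to (v_j, 0) is exactly r; (ii) for each i, j with i + 2 ≤ j ≤ n, the number of 2-step 0-simple paths from (v_i, 0) to (v_j, 0) is exactly (r(r−1)/2)·(j − i − 1); consequently, for each i with i + 2 ≤ n, the total number of 0-simple paths from (v_i, 0) to (v_{i+2}, 0) is r(r+1)/2. -/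
namespace QL

/-- Edges of the graph `L_{2n−1} ×_m ℤ_r`: a pair `(i,j)` with `i ≤ j` (the edge
`e_{i,j}` of `L_{2n−1}`) together with an element `k` of `ℤ_r`. -/
abbrev Edge (n r : ℕ) := {p : Fin n × Fin n // p.1 ≤ p.2} × ZMod r

/-- The source of the edge `(e_{i,j}, k)` is `(v_i, k − m_i)`. -/
def esrc (n r : ℕ) (m : Fin n → ℕ) (e : Edge n r) : Fin n × ZMod r :=
  (e.1.1.1, e.2 - (m e.1.1.1 : ZMod r))

/-- The range of the edge `(e_{i,j}, k)` is `(v_j, k)`. -/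
def ern (n r : ℕ) (e : Edge n r) : Fin n × ZMod r :=
  (e.1.1.2, e.2)

/-- A list of edges is a path if consecutive edges are composable. -/
def IsQPath (n r : ℕ) (m : Fin n → ℕ) (p : List (Edge n r)) : Prop :=
  List.Chain' (fun e f => ern n r e = esrc n r m f) p

/-- A path `(e_{i₁,j₁},k₁)⋯(e_{i_ℓ,j_ℓ},k_ℓ)` is `0`-simple if `k₁ = m_{i₁}`,
`k_a ≠ 0` for `a ≠ ℓ` and `k_ℓ = 0`. -/
def ZeroSimple (n r : ℕ) (m : Fin n → ℕ) (p : List (Edge n r)) : Prop :=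
  ∃ h : p ≠ [], IsQPath n r m p ∧
    (p.head h).2 = (m (p.head h).1.1.1 : ZMod r) ∧
    (∀ e ∈ p.dropLast, e.2 ≠ (0 : ZMod r)) ∧
    (p.getLast h).2 = 0

/-- A `0`-simple path is `k`-step if there are indices `t₁ < ⋯ < t_{k+1}` starting at
the source index and ending at the final range index, such that every edge of the path
has its range among the columns `t_q`, and every interior column `t_q` (`2 ≤ q ≤ k`) is
actually visited. -/
def KStep (n r : ℕ) (k : ℕ) (p : List (Edge n r)) : Prop :=
  ∃ (h : p ≠ []) (t : Fin (k + 1) → Fin n), StrictMono t ∧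
    t 0 = (p.head h).1.1.1 ∧ t (Fin.last k) = (p.getLast h).1.1.2 ∧
    (∀ e ∈ p, ∃ q : Fin (k + 1), (e : Edge n r).1.1.2 = t q) ∧
    ∀ q : Fin (k + 1), 0 < (q : ℕ) → (q : ℕ) < k → ∃ e ∈ p, (e : Edge n r).1.1.2 = t q

end QL

/-!
In column `v` every edge raises the level by `m v`, a unit of `ZMod r`. Hence a path in column `v`
at level `-(t * m v)`, `1 ≤ t ≤ r`, would reach level `0` after `t` edges, having met the levels
`-(s * m v)`, `1 ≤ s < t`, on the way. The paths from there to `(v_j, 0)` avoiding level `0` are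
the one whose `t`-th edge leads straight to `(v_j, 0)` and those that first leave column `v` by
arriving in some later column at one of these levels. From the last column there is therefore one
path, and from a column with `j` as its only successor there are `t`. A path starting at `(v_i, 0)`
enters an intermediate column `l` at each nonzero level in exactly one way; since multiplication
by a unit permutes the nonzero levels, the paths through `l` number `1 + 2 + ⋯ + (r - 1)`,
whatever `m` is.
-/

namespace QL

open Finset

theorem encard_biUnion_finset {ι α : Type*} (s : Finset ι) (f : ι → Set α)
    (hf : (s : Set ι).PairwiseDisjoint f) :
    (⋃ x ∈ s, f x).encard = ∑ x ∈ s, (f x).encard := by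
  rw [← finsum_mem_coe_finset, ← s.finite_toSet.encard_biUnion hf]
  simp only [SetLike.mem_coe]

theorem card_eq_three_iff_exists_mem_Ioo {α : Type*} [LinearOrder α] [LocallyFiniteOrder α]
    {a b : α} {T : Finset α} (ha : a ∈ T) (hb : b ∈ T) (hab : a < b) (hT : T ⊆ Icc a b) :
    #T = 3 ↔ ∃ c ∈ Ioo a b, T = {a, c, b} := by
  constructor
  · intro hT_card
    have hab_subset : {a, b} ⊆ T := insert_subset ha (singleton_subset_iff.2 hb)
    obtain ⟨c, hc⟩ : ∃ c, T \ {a, b} = {c} := card_eq_one.1 <| by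
      rw [card_sdiff_of_subset hab_subset, hT_card, card_pair hab.ne]
    have mem_iff (x) : x ∈ T ∧ x ∉ ({a, b} : Finset α) ↔ x = c := by
      rw [← mem_sdiff, hc, mem_singleton]
    obtain ⟨hcT, hc_notMem⟩ := (mem_iff c).2 rfl
    exact ⟨c, by grind, by grind⟩
  · rintro ⟨c, hc, rfl⟩
    obtain ⟨hac, hcb⟩ := mem_Ioo.1 hc
    exact card_eq_three.2 ⟨a, c, b, hac.ne, hab.ne, hcb.ne, rfl⟩

theorem sum_Ico_one_id (r : ℕ) : ∑ t ∈ Ico 1 r, t = r.choose 2 := by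
  rw [Nat.choose_two_right, ← sum_range_id, range_eq_Ico]
  exact sum_subset (Ico_subset_Ico_left zero_le_one) (by simp; omega)

theorem two_mul_choose_two (a : ℕ) : 2 * a.choose 2 = a * (a - 1) := by
  rw [Nat.choose_two_right, Nat.two_mul_div_two_of_even (Nat.even_mul_pred_self a)]

variable {n r : ℕ} {m : Fin n → ℕ} {S : Finset (Fin n)} {i j l v : Fin n} {k : ZMod r}
  {e : Edge n r} {p : List (Edge n r)}

section Levels

variable {u : ZMod r}

theorem natCast_mul_ne_zero (hu : IsUnit u) {t : ℕ} (ht : 0 < t) (htr : t < r) :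
    (t : ZMod r) * u ≠ 0 := by
  rw [Ne, hu.mul_left_eq_zero, ZMod.natCast_eq_zero_iff]
  exact Nat.not_dvd_of_pos_of_lt ht htr

theorem exists_natCast_mul_eq [NeZero r] (hu : IsUnit u) (x : ZMod r) :
    ∃ t : ℕ, 1 ≤ t ∧ t ≤ r ∧ (t : ZMod r) * u = x := by
  obtain ⟨u, rfl⟩ := hu
  exact ⟨(x * ↑u⁻¹ - 1).val + 1, Nat.le_add_left _ _, ZMod.val_lt _, by simp⟩

theorem sum_Ico_natCast_mul [NeZero r] {M : Type*} [AddCommMonoid M] (hu : IsUnit u)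
    (f : ZMod r → M) : ∑ t ∈ Ico 1 r, f (t * u) = ∑ x ∈ {0}ᶜ, f x := by
  obtain ⟨u, rfl⟩ := hu
  refine sum_nbij' (fun t => t * u) (fun x => (x * ↑u⁻¹).val) ?_ ?_ ?_ ?_ fun _ _ => rfl
  · intro t ht
    obtain ⟨ht, htr⟩ := mem_Ico.1 ht
    simpa only [mem_compl, mem_singleton] using natCast_mul_ne_zero u.isUnit ht htr
  · intro x hx
    simp only [mem_compl, mem_singleton] at hx
    exact mem_Ico.2 ⟨ZMod.val_pos.2 (by simpa using hx), ZMod.val_lt _⟩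
  · intro t ht
    simp [ZMod.val_cast_of_lt (mem_Ico.1 ht).2]
  · intro x _
    simp

end Levels

section Paths

/-- The paths from `(v, k)` to `(j, 0)` which meet level `0` at no vertex strictly in between, and
all of whose edges have their range in a column of `S`. For `k = 0` and `S = univ` these are the
`0`-simple paths from `(v, 0)` to `(j, 0)`; the general `k` and `S` are needed to recurse on the
first edge and to prescribe the columns. -/
def firstPassagePaths (m : Fin n → ℕ) (S : Finset (Fin n)) (j v : Fin n) (k : ZMod r) :
    Set (List (Edge n r)) :=
  {p | ∃ h : p ≠ [], IsQPath n r m p ∧ esrc n r m (p.head h) = (v, k) ∧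
    (∀ e ∈ p.dropLast, e.2 ≠ 0) ∧ ern n r (p.getLast h) = (j, 0) ∧ ∀ e ∈ p, e.1.1.2 ∈ S}

theorem nil_notMem_firstPassagePaths : [] ∉ firstPassagePaths m S j v k :=
  fun h => h.1 rfl

theorem firstPassagePaths_mono {T : Finset (Fin n)} (hST : S ⊆ T) :
    firstPassagePaths m S j v k ⊆ firstPassagePaths m T j v k :=
  fun _ ⟨h, hp, hs, hlevel, hj, hS⟩ => ⟨h, hp, hs, hlevel, hj, fun e he => hST (hS e he)⟩

theorem isQPath_iff_isChain :
    IsQPath n r m p ↔ p.IsChain fun e f => ern n r e = esrc n r m f :=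
  Iff.rfl

theorem cons_mem_firstPassagePaths :
    e :: p ∈ firstPassagePaths m S j v k ↔ esrc n r m e = (v, k) ∧ e.1.1.2 ∈ S ∧
      (e.2 = 0 ∧ e.1.1.2 = j ∧ p = [] ∨
        e.2 ≠ 0 ∧ p ∈ firstPassagePaths m S j e.1.1.2 e.2) := by
  rcases p with _ | ⟨f, p⟩
  · simp only [firstPassagePaths, isQPath_iff_isChain, ern, Set.mem_ofPred_eq,
      List.isChain_singleton, List.head_cons, List.getLast_singleton, List.dropLast_singleton,
      List.forall_mem_cons, Prod.mk.injEq]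
    grind
  · simp only [firstPassagePaths, isQPath_iff_isChain, ern, Set.mem_ofPred_eq,
      List.isChain_cons_cons, List.head_cons, List.getLast_cons_cons, List.dropLast_cons_cons,
      List.forall_mem_cons, Prod.mk.injEq]
    grind

/-- The set of columns met by a path `p` that starts in column `v`. By
`kStep_iff_card_visitedColumns` its cardinality decides for which `c` the path is `c`-step. The
start column is an argument because the empty path does not determine it. -/
def visitedColumns (v : Fin n) (p : List (Edge n r)) : Finset (Fin n) :=
  insert v (p.map fun e => e.1.1.2).toFinset

theorem mem_visitedColumns {w : Fin n} :
    w ∈ visitedColumns v p ↔ w = v ∨ ∃ e ∈ p, e.1.1.2 = w := by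
  simp only [visitedColumns, mem_insert, List.mem_toFinset, List.mem_map]

theorem range_mem_visitedColumns (he : e ∈ p) : e.1.1.2 ∈ visitedColumns v p :=
  mem_visitedColumns.2 (Or.inr ⟨e, he, rfl⟩)

theorem start_mem_visitedColumns : v ∈ visitedColumns v p :=
  mem_insert_self _ _

theorem visitedColumns_cons :
    visitedColumns v (e :: p) = insert v (visitedColumns e.1.1.2 p) := by
  simp only [visitedColumns, List.map_cons, List.toFinset_cons]

theorem target_mem_visitedColumns (hp : p ∈ firstPassagePaths m S j v k) :
    j ∈ visitedColumns v p := by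
  obtain ⟨h, -, -, -, hj, -⟩ := hp
  exact mem_visitedColumns.2 (Or.inr ⟨p.getLast h, p.getLast_mem h, congrArg Prod.fst hj⟩)

theorem visitedColumns_subset_Icc (hp : p ∈ firstPassagePaths m S j v k) :
    visitedColumns v p ⊆ Icc v j := by
  induction p generalizing v k with
  | nil => exact absurd hp nil_notMem_firstPassagePaths
  | cons e p ih =>
    obtain ⟨hs, -, h⟩ := cons_mem_firstPassagePaths.1 hp
    have hs : e.1.1.1 = v := congrArg Prod.fst hs
    have hv : v ≤ e.1.1.2 := hs ▸ e.1.2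
    rw [visitedColumns_cons]
    rcases h with ⟨-, rfl, rfl⟩ | ⟨-, hp⟩
    · intro w hw
      simp only [visitedColumns, List.map_nil, List.toFinset_nil, mem_insert, notMem_empty,
        or_false] at hw
      rcases hw with rfl | rfl <;> simp [hv]
    · have hj : e.1.1.2 ≤ j := (mem_Icc.1 (ih hp start_mem_visitedColumns)).2
      exact insert_subset (mem_Icc.2 ⟨le_rfl, hv.trans hj⟩)
        ((ih hp).trans (Icc_subset_Icc_left hv))

theorem le_of_mem_firstPassagePaths (hp : p ∈ firstPassagePaths m S j v k) : v ≤ j :=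
  (mem_Icc.1 (visitedColumns_subset_Icc hp (target_mem_visitedColumns hp))).1

theorem mem_firstPassagePaths_iff_visitedColumns_subset (hv : v ∈ S) :
    p ∈ firstPassagePaths m S j v k ↔
      p ∈ firstPassagePaths m univ j v k ∧ visitedColumns v p ⊆ S := by
  have subset_iff : visitedColumns v p ⊆ S ↔ ∀ e ∈ p, e.1.1.2 ∈ S :=
    ⟨fun h e he => h (range_mem_visitedColumns he), fun h w hw => by
      rcases mem_visitedColumns.1 hw with rfl | ⟨e, he, rfl⟩
      exacts [hv, h e he]⟩
  simp only [firstPassagePaths, Set.mem_ofPred_eq, subset_iff, mem_univ, implies_true, and_true]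
  tauto

end Paths

section Recursion

theorem firstPassagePaths_of_add_eq_zero (hj : j ∈ S) (hvj : v ≤ j) (hk : k + m v = 0) :
    firstPassagePaths m S j v k = {[(⟨(v, j), hvj⟩, 0)]} := by
  ext p
  rcases p with _ | ⟨⟨⟨⟨a, b⟩, hab⟩, c⟩, p⟩
  · simp [nil_notMem_firstPassagePaths]
  rw [cons_mem_firstPassagePaths]
  have hc : c - m v = k ↔ c = 0 := by grind
  simp only [esrc, Prod.mk.injEq, Set.mem_singleton_iff, List.cons.injEq, Subtype.mk.injEq]
  grind

theorem firstPassagePaths_of_add_ne_zero (hk : k + m v ≠ 0) :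
    firstPassagePaths m S j v k = ⋃ w ∈ S ∩ Icc v j, ⋃ h : v ≤ w,
      List.cons (⟨(v, w), h⟩, k + (m v : ZMod r)) '' firstPassagePaths m S j w (k + m v) := by
  ext p
  simp only [Set.mem_iUnion, exists_prop, mem_inter, mem_Icc]
  constructor
  · rcases p with _ | ⟨⟨⟨⟨a, w⟩, haw⟩, c⟩, p⟩
    · exact fun hp => absurd hp nil_notMem_firstPassagePaths
    intro hp
    obtain ⟨hs, hw, h⟩ := cons_mem_firstPassagePaths.1 hp
    simp only [esrc, Prod.mk.injEq] at hs
    obtain ⟨rfl, hs⟩ := hs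
    obtain rfl : c = k + m a := sub_eq_iff_eq_add.1 hs
    rcases h with ⟨h, -⟩ | ⟨-, hp⟩
    · exact absurd h hk
    · exact ⟨w, ⟨hw, haw, le_of_mem_firstPassagePaths hp⟩, haw, p, hp, rfl⟩
  · rintro ⟨w, ⟨hw, -⟩, hvw, p, hp, rfl⟩
    exact cons_mem_firstPassagePaths.2 ⟨by simp [esrc], hw, Or.inr ⟨hk, hp⟩⟩

theorem encard_firstPassagePaths_of_add_ne_zero (hk : k + m v ≠ 0) :
    (firstPassagePaths m S j v k).encard =
      ∑ w ∈ S ∩ Icc v j, (firstPassagePaths m S j w (k + (m v : ZMod r))).encard := by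
  rw [firstPassagePaths_of_add_ne_zero hk, encard_biUnion_finset]
  · refine sum_congr rfl fun w hw => ?_
    have hvw : v ≤ w := (mem_Icc.1 (mem_inter.1 hw).2).1
    simp only [hvw, Set.iUnion_true, List.cons_injective.encard_image]
  · intro w _ w' _ hne
    simp only [Function.onFun, Set.disjoint_left, Set.mem_iUnion]
    rintro _ ⟨_, p, _, rfl⟩ ⟨_, q, _, h⟩
    simp only [List.cons.injEq, Prod.mk.injEq, Subtype.mk.injEq, true_and, and_true] at h
    exact hne h.1.symm

theorem encard_firstPassagePaths_neg_natCast_mul (hu : IsUnit (m v : ZMod r)) (hv : v ∈ S)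
    (hj : j ∈ S) (hvj : v ≤ j) {t : ℕ} (ht : 1 ≤ t) (htr : t ≤ r) :
    (firstPassagePaths m S j v (-(t * m v : ZMod r))).encard =
      1 + ∑ s ∈ Ico 1 t, ∑ w ∈ S ∩ Ioc v j,
        (firstPassagePaths m S j w (-(s * m v : ZMod r))).encard := by
  induction t, ht using Nat.le_induction with
  | base =>
    rw [firstPassagePaths_of_add_eq_zero hj hvj (by simp)]
    simp
  | succ t ht ih =>
    have next_level : -((t + 1 : ℕ) * m v : ZMod r) + m v = -(t * m v : ZMod r) := by
      push_cast
      ring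
    have next_ne_zero : -(t * m v : ZMod r) ≠ 0 :=
      neg_ne_zero.2 (natCast_mul_ne_zero hu ht htr)
    rw [encard_firstPassagePaths_of_add_ne_zero (next_level ▸ next_ne_zero), next_level,
      ← Ioc_insert_left hvj, inter_insert_of_mem hv, sum_insert (by simp), ih (by omega),
      sum_Ico_succ_top ht, add_assoc]

end Recursion

section Counts

variable [NeZero r]

theorem encard_firstPassagePaths_self (hu : IsUnit (m j : ZMod r)) (hj : j ∈ S) (k : ZMod r) :
    (firstPassagePaths m S j j k).encard = 1 := by
  obtain ⟨t, ht, htr, hk⟩ := exists_natCast_mul_eq hu (-k)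
  rw [← neg_eq_iff_eq_neg.2 hk, encard_firstPassagePaths_neg_natCast_mul hu hj hj le_rfl ht htr]
  simp

theorem encard_firstPassagePaths_of_inter_Ioc_eq_singleton (hm : ∀ i, IsUnit (m i : ZMod r))
    (hv : v ∈ S) (hS : S ∩ Ioc v j = {j}) {t : ℕ} (ht : 1 ≤ t) (htr : t ≤ r) :
    (firstPassagePaths m S j v (-(t * m v : ZMod r))).encard = t := by
  obtain ⟨hj, hvj⟩ := mem_inter.1 (hS ▸ mem_singleton_self j)
  rw [encard_firstPassagePaths_neg_natCast_mul (hm v) hv hj (mem_Ioc.1 hvj).1.le ht htr]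
  simp only [hS, sum_singleton, encard_firstPassagePaths_self (hm j) hj, sum_const, Nat.card_Ico,
    nsmul_one]
  exact_mod_cast Nat.add_sub_cancel' ht

theorem encard_firstPassagePaths_zero (hu : IsUnit (m i : ZMod r)) (hi : i ∈ S) (hj : j ∈ S)
    (hij : i ≤ j) : (firstPassagePaths m S j i (0 : ZMod r)).encard =
      1 + ∑ w ∈ S ∩ Ioc i j, ∑ x ∈ ({0}ᶜ : Finset (ZMod r)),
        (firstPassagePaths m S j w x).encard := by
  have h := encard_firstPassagePaths_neg_natCast_mul hu hi hj hij NeZero.one_le le_rfl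
  simp only [CharP.cast_eq_zero, zero_mul, neg_zero, ← mul_neg] at h
  rw [h, sum_comm]
  exact congrArg _ (sum_congr rfl fun w _ =>
    sum_Ico_natCast_mul hu.neg fun x => (firstPassagePaths m S j w x).encard)

theorem encard_firstPassagePaths_zero_of_inter_Ioc_eq_singleton
    (hm : ∀ i, IsUnit (m i : ZMod r)) (hi : i ∈ S) (hS : S ∩ Ioc i j = {j}) :
    (firstPassagePaths m S j i (0 : ZMod r)).encard = r := by
  simpa using encard_firstPassagePaths_of_inter_Ioc_eq_singleton hm hi hS NeZero.one_le le_rfl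

theorem encard_firstPassagePaths_zero_of_inter_Ioc_eq_pair (hm : ∀ i, IsUnit (m i : ZMod r))
    (hi : i ∈ S) (hlj : l < j) (hS : S ∩ Ioc i j = {l, j}) :
    (firstPassagePaths m S j i (0 : ZMod r)).encard = (r + r.choose 2 : ℕ) := by
  obtain ⟨hl, hil⟩ := mem_inter.1 (hS ▸ mem_insert_self l {j})
  obtain ⟨hj, hij⟩ := mem_inter.1 (hS ▸ mem_insert_of_mem (mem_singleton_self j))
  have hSl : S ∩ Ioc l j = {j} := by
    ext w
    have := Finset.ext_iff.1 hS w
    grind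
  have through_l : ∑ x ∈ ({0}ᶜ : Finset (ZMod r)), (firstPassagePaths m S j l x).encard =
      (r.choose 2 : ℕ) := by
    rw [← sum_Ico_natCast_mul (hm l).neg, ← sum_Ico_one_id, Nat.cast_sum]
    refine sum_congr rfl fun t ht => ?_
    rw [mul_neg]
    exact encard_firstPassagePaths_of_inter_Ioc_eq_singleton hm hl hSl (mem_Ico.1 ht).1
      (mem_Ico.1 ht).2.le
  rw [encard_firstPassagePaths_zero (hm i) hi hj (mem_Ioc.1 hij).1.le, hS, sum_pair hlj.ne,
    through_l]
  simp only [encard_firstPassagePaths_self (hm j) hj, sum_const, card_compl, card_singleton,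
    ZMod.card, nsmul_one]
  have := NeZero.one_le (n := r)
  norm_cast
  omega

end Counts

section Steps

variable {c : ℕ}

theorem KStep.card_visitedColumns (hp : p ∈ firstPassagePaths m S j i k) (hc : KStep n r c p) :
    #(visitedColumns i p) = c + 1 := by
  obtain ⟨h, t, ht_mono, ht_zero, ht_last, ht_range, ht_visited⟩ := hc
  have head_src : (p.head h).1.1.1 = i := congrArg Prod.fst hp.2.2.1
  have visited_eq : visitedColumns i p = univ.image t := by
    ext w
    rw [mem_visitedColumns]
    simp only [mem_image, mem_univ, true_and]
    constructor
    · rintro (rfl | ⟨e, he, rfl⟩)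
      · exact ⟨0, ht_zero.trans head_src⟩
      · exact (ht_range e he).imp fun _ => Eq.symm
    · rintro ⟨q, rfl⟩
      rcases eq_or_ne q 0 with rfl | hq_zero
      · exact Or.inl (ht_zero.trans head_src)
      rcases eq_or_ne q (Fin.last c) with rfl | hq_last
      · exact Or.inr ⟨p.getLast h, p.getLast_mem h, ht_last.symm⟩
      · exact Or.inr (ht_visited q (Fin.pos_iff_ne_zero.2 hq_zero) (Fin.val_lt_last hq_last))
  rw [visited_eq, card_image_of_injective _ ht_mono.injective, card_univ, Fintype.card_fin]

theorem kStep_of_card_visitedColumns (hp : p ∈ firstPassagePaths m S j i k)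
    (hc : #(visitedColumns i p) = c + 1) : KStep n r c p := by
  have ⟨h, _, head_src, _, last_range, _⟩ := hp
  let t := (visitedColumns i p).orderEmbOfFin hc
  have t_mem (q) : t q ∈ visitedColumns i p := orderEmbOfFin_mem _ hc q
  have exists_t_eq {w} (hw : w ∈ visitedColumns i p) : ∃ q, t q = w := by
    rwa [← Set.mem_range, range_orderEmbOfFin, mem_coe]
  have t_mem_Icc (q) : t q ∈ Icc i j := visitedColumns_subset_Icc hp (t_mem q)
  have t_zero : t 0 = i := by
    obtain ⟨q, hq⟩ := exists_t_eq start_mem_visitedColumns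
    exact ((t.monotone (Fin.zero_le q)).trans_eq hq).antisymm (mem_Icc.1 (t_mem_Icc 0)).1
  have t_last : t (Fin.last c) = j := by
    obtain ⟨q, hq⟩ := exists_t_eq (target_mem_visitedColumns hp)
    exact (mem_Icc.1 (t_mem_Icc _)).2.antisymm (hq.symm.trans_le (t.monotone (Fin.le_last q)))
  refine ⟨h, t, t.strictMono, t_zero.trans (congrArg Prod.fst head_src).symm,
    t_last.trans (congrArg Prod.fst last_range).symm,
    fun e he => (exists_t_eq (range_mem_visitedColumns he)).imp fun _ => Eq.symm, ?_⟩
  intro q hq _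
  refine (mem_visitedColumns.1 (t_mem q)).resolve_left fun hqi => ?_
  exact (Fin.pos_iff_ne_zero.1 hq) (t.injective (hqi.trans t_zero.symm))

theorem kStep_iff_card_visitedColumns (hp : p ∈ firstPassagePaths m S j i k) :
    KStep n r c p ↔ #(visitedColumns i p) = c + 1 :=
  ⟨KStep.card_visitedColumns hp, kStep_of_card_visitedColumns hp⟩

/-- The `0`-simple paths from `(v_i, 0)` to `(v_j, 0)`, the objects counted in part (iii). -/
def zeroSimplePaths (r : ℕ) (m : Fin n → ℕ) (i j : Fin n) : Set (List (Edge n r)) :=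
  {p | ∃ h : p ≠ [], ZeroSimple n r m p ∧
    esrc n r m (p.head h) = (i, 0) ∧ ern n r (p.getLast h) = (j, 0)}

/-- The `c`-step `0`-simple paths from `(v_i, 0)` to `(v_j, 0)`, the objects counted in parts (i)
(`c = 1`) and (ii) (`c = 2`). -/
def kStepPaths (r : ℕ) (m : Fin n → ℕ) (c : ℕ) (i j : Fin n) : Set (List (Edge n r)) :=
  {p | ∃ h : p ≠ [], ZeroSimple n r m p ∧ KStep n r c p ∧
    esrc n r m (p.head h) = (i, 0) ∧ ern n r (p.getLast h) = (j, 0)}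

theorem zeroSimplePaths_eq_firstPassagePaths :
    zeroSimplePaths r m i j = firstPassagePaths m univ j i 0 := by
  ext p
  constructor
  · rintro ⟨h, ⟨_, hp, -, hlevel, -⟩, hs, hl⟩
    exact ⟨h, hp, hs, hlevel, hl, fun _ _ => mem_univ _⟩
  · rintro ⟨h, hp, hs, hlevel, hl, -⟩
    exact ⟨h, ⟨h, hp, sub_eq_zero.1 (congrArg Prod.snd hs), hlevel, congrArg Prod.snd hl⟩, hs, hl⟩

theorem mem_kStepPaths_iff_card_visitedColumns :
    p ∈ kStepPaths r m c i j ↔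
      p ∈ firstPassagePaths m univ j i 0 ∧ #(visitedColumns i p) = c + 1 := by
  have mem_iff : p ∈ kStepPaths r m c i j ↔ p ∈ zeroSimplePaths r m i j ∧ KStep n r c p := by
    simp only [kStepPaths, zeroSimplePaths, Set.mem_ofPred_eq]
    tauto
  rw [mem_iff, zeroSimplePaths_eq_firstPassagePaths]
  exact and_congr_right kStep_iff_card_visitedColumns

theorem kStepPaths_one_eq_firstPassagePaths (hij : i < j) :
    kStepPaths r m 1 i j = firstPassagePaths m {i, j} j i 0 := by
  ext p
  rw [mem_kStepPaths_iff_card_visitedColumns,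
    mem_firstPassagePaths_iff_visitedColumns_subset (mem_insert_self i {j})]
  refine and_congr_right fun hp => ?_
  have pair_subset : {i, j} ⊆ visitedColumns i p :=
    insert_subset start_mem_visitedColumns (singleton_subset_iff.2 (target_mem_visitedColumns hp))
  rw [one_add_one_eq_two, ← card_pair hij.ne]
  exact ⟨fun hc => (eq_of_subset_of_card_le pair_subset hc.le).ge,
    fun hS => congrArg card (hS.antisymm pair_subset)⟩

theorem kStepPaths_two_eq_biUnion (hij : i < j) :
    kStepPaths r m 2 i j =
      ⋃ l ∈ Ioo i j, {p ∈ firstPassagePaths m univ j i 0 | visitedColumns i p = {i, l, j}} := by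
  ext p
  rw [mem_kStepPaths_iff_card_visitedColumns]
  simp only [Set.mem_iUnion, exists_prop, Set.mem_ofPred_eq, exists_and_left,
    and_left_comm (b := p ∈ _)]
  exact and_congr_right fun hp => card_eq_three_iff_exists_mem_Ioo start_mem_visitedColumns
    (target_mem_visitedColumns hp) hij (visitedColumns_subset_Icc hp)

theorem setOf_visitedColumns_eq_triple (hil : i < l) (hlj : l < j) :
    {p ∈ firstPassagePaths m univ j i k | visitedColumns i p = {i, l, j}} =
      firstPassagePaths m {i, l, j} j i k \ firstPassagePaths m {i, j} j i k := by
  ext p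
  rw [Set.mem_sdiff, mem_firstPassagePaths_iff_visitedColumns_subset (mem_insert_self i _),
    mem_firstPassagePaths_iff_visitedColumns_subset (mem_insert_self i _)]
  simp only [Set.mem_ofPred_eq]
  constructor
  · rintro ⟨hp, hp_eq⟩
    refine ⟨⟨hp, hp_eq.subset⟩, fun ⟨_, hp_subset⟩ => ?_⟩
    have hl : l ∈ ({i, j} : Finset (Fin n)) := hp_subset (hp_eq ▸ by simp)
    grind
  · rintro ⟨⟨hp, hp_subset⟩, hl⟩
    have hi := start_mem_visitedColumns (v := i) (p := p)
    have hj := target_mem_visitedColumns hp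
    grind

end Steps

section StepCounts

variable [NeZero r]

theorem encard_kStepPaths_one (hm : ∀ i, IsUnit (m i : ZMod r)) (hij : i < j) :
    (kStepPaths r m 1 i j).encard = r := by
  rw [kStepPaths_one_eq_firstPassagePaths hij]
  exact encard_firstPassagePaths_zero_of_inter_Ioc_eq_singleton hm (mem_insert_self i _)
    (by ext; grind)

theorem encard_setOf_visitedColumns_eq_triple (hm : ∀ i, IsUnit (m i : ZMod r)) (hil : i < l)
    (hlj : l < j) :
    {p ∈ firstPassagePaths m univ j i (0 : ZMod r) | visitedColumns i p = {i, l, j}}.encard =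
      r.choose 2 := by
  have pair_subset_triple : ({i, j} : Finset (Fin n)) ⊆ {i, l, j} :=
    insert_subset_insert i (subset_insert l {j})
  have h := Set.encard_sdiff_add_encard_of_subset
    (firstPassagePaths_mono (m := m) (j := j) (v := i) (k := (0 : ZMod r)) pair_subset_triple)
  rw [← setOf_visitedColumns_eq_triple hil hlj,
    encard_firstPassagePaths_zero_of_inter_Ioc_eq_singleton hm (mem_insert_self i _)
      (by ext; grind),
    encard_firstPassagePaths_zero_of_inter_Ioc_eq_pair hm (mem_insert_self i _) hlj
      (by ext; grind), Nat.cast_add, add_comm] at h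
  exact ENat.add_right_injective_of_ne_top (ENat.natCast_ne_top r) h

theorem encard_kStepPaths_two (hm : ∀ i, IsUnit (m i : ZMod r)) (hij : i < j) :
    (kStepPaths r m 2 i j).encard = ((j - i - 1) * r.choose 2 : ℕ) := by
  rw [kStepPaths_two_eq_biUnion hij, encard_biUnion_finset, sum_congr rfl fun l hl =>
    encard_setOf_visitedColumns_eq_triple hm (mem_Ioo.1 hl).1 (mem_Ioo.1 hl).2]
  · rw [sum_const, Fin.card_Ioo, nsmul_eq_mul, Nat.cast_mul]
  · intro l hl l' _ hne
    rw [Function.onFun, Set.disjoint_left]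
    rintro p ⟨_, hp⟩ ⟨_, hp'⟩
    rw [hp] at hp'
    have := Finset.ext_iff.1 hp' l
    grind

theorem encard_zeroSimplePaths (hm : ∀ i, IsUnit (m i : ZMod r)) (hil : i ⋖ l) (hlj : l ⋖ j) :
    (zeroSimplePaths r m i j).encard = ((r + 1).choose 2 : ℕ) := by
  rw [zeroSimplePaths_eq_firstPassagePaths, Nat.choose_succ_succ' r 1, Nat.choose_one_right]
  refine encard_firstPassagePaths_zero_of_inter_Ioc_eq_pair hm (mem_univ i) hlj.lt ?_
  rw [univ_inter, ← coe_inj, coe_Ioc, ← Set.Ioc_union_Ioc_eq_Ioc hil.le hlj.le, hil.Ioc_eq,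
    hlj.Ioc_eq, coe_pair]
  rfl

end StepCounts

end QL

open QL in
/-- Lemma `l:PathsQuantum` (i), (ii): in `L_{2n−1} ×_m ℤ_r`, for
`i + 1 ≤ j` there are exactly `r` one-step `0`-simple paths from `(v_i,0)` to `(v_j,0)`;
for `i + 2 ≤ j` there are exactly `r(r−1)/2 · (j−i−1)` two-step `0`-simple paths from
`(v_i,0)` to `(v_j,0)`; consequently there are `r(r+1)/2` `0`-simple paths from
`(v_i,0)` to `(v_{i+2},0)`. -/
theorem stmt18 (n r : ℕ) (hr : 2 ≤ r) (m : Fin n → ℕ) (hm : ∀ i, 0 < m i)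
    (hgcd : ∀ i, Nat.gcd (m i) r = 1) :
    (∀ i j : Fin n, (i : ℕ) + 1 ≤ (j : ℕ) →
      Nat.card {p : List (Edge n r) // ∃ h : p ≠ [], ZeroSimple n r m p ∧
        KStep n r 1 p ∧ esrc n r m (p.head h) = (i, 0) ∧ ern n r (p.getLast h) = (j, 0)}
        = r) ∧
    (∀ i j : Fin n, (i : ℕ) + 2 ≤ (j : ℕ) →
      2 * Nat.card {p : List (Edge n r) // ∃ h : p ≠ [], ZeroSimple n r m p ∧
        KStep n r 2 p ∧ esrc n r m (p.head h) = (i, 0) ∧ ern n r (p.getLast h) = (j, 0)}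
        = r * (r - 1) * ((j : ℕ) - (i : ℕ) - 1)) ∧
    (∀ i j : Fin n, (i : ℕ) + 2 = (j : ℕ) →
      2 * Nat.card {p : List (Edge n r) // ∃ h : p ≠ [], ZeroSimple n r m p ∧
        esrc n r m (p.head h) = (i, 0) ∧ ern n r (p.getLast h) = (j, 0)}
        = r * (r + 1)) := by
  have : NeZero r := ⟨by omega⟩
  have hunit (i : Fin n) : IsUnit (m i : ZMod r) := (ZMod.isUnit_iff_coprime _ _).2 (hgcd i)
  refine ⟨fun i j hij => ?_, fun i j hij => ?_, fun i j hij => ?_⟩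
  · change (kStepPaths r m 1 i j).ncard = r
    rw [Set.ncard, encard_kStepPaths_one hunit (Fin.lt_def.2 hij), ENat.toNat_natCast]
  · change 2 * (kStepPaths r m 2 i j).ncard = _
    rw [Set.ncard, encard_kStepPaths_two hunit (Fin.lt_def.2 (by omega)), ENat.toNat_natCast,
      mul_left_comm, two_mul_choose_two, mul_comm]
  · change 2 * (zeroSimplePaths r m i j).ncard = _
    let l : Fin n := ⟨i + 1, by omega⟩
    have hil : i ⋖ l := Fin.covBy_iff.2 (Nat.covBy_iff_add_one_eq.2 rfl)
    have hlj : l ⋖ j := Fin.covBy_iff.2 (Nat.covBy_iff_add_one_eq.2 hij)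
    rw [Set.ncard, encard_zeroSimplePaths hunit hil hlj, ENat.toNat_natCast, two_mul_choose_two,
      Nat.add_sub_cancel, mul_comm]
end
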